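/- arXiv:1902.09034 — 2 statements merged into one kernel-verified Lean document; each statement's English description precedes it below -/
import Mathlib

section
/- Let m, n be positive integers, A ∈ M_{n,m}(𝔽_q((z⁻¹))) non-degenerate, and (y_i)_{i≥1} a sequence of best approximations related to Aᵀ, writing y_i = (y_{i1}, …, y_{in}) and Y_i = ‖y_i‖. Then for almost all θ = (θ_1, …, θ_n) ∈ 𝔽_q((z⁻¹))ⁿ with respect to the Haar measure on the additive group 𝔽_q((z⁻¹))ⁿ, the following holds: for every δ > 0, the inequality ⟨y_{i1}θ_1 + ⋯ + y_{in}θ_n⟩ ≥ Y_i^{−δ} holds for all sufficiently large i. -/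
/-!
Common setup: the field `𝔽_q((z⁻¹))` of formal power series over a finite field `K` of
cardinality `q`, modeled as the field `FF K` of formal Laurent series in `t = z⁻¹`,
together with its non-Archimedean norm, the embedding of the polynomial ring `𝔽_q[z]`,
distances to polynomial (vectors), Diophantine exponents, `Bad` sets, continued fractions
and best approximation sequences.
-/

open scoped Classical ENNReal NNReal
open Filter

noncomputable section

set_option linter.unusedSectionVars false

namespace FPSDA

variable (K : Type*) [Field K] [Fintype K]

/-- The field `𝔽_q((z⁻¹))` of formal power series in `z⁻¹` over the finite field `K = 𝔽_q`,
modeled as the field of formal Laurent series in the variable `t = z⁻¹`. -/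
def FF : Type _ := LaurentSeries K

instance : Field (FF K) := inferInstanceAs (Field (LaurentSeries K))

variable {K}

/-- The identity map, viewing an element of `𝔽_q((z⁻¹))` as a Laurent series in `t = z⁻¹`. -/
def toL (x : FF K) : LaurentSeries K := x

@[simp] lemma toL_zero : toL (0 : FF K) = 0 := rfl
@[simp] lemma toL_add (x y : FF K) : toL (x + y) = toL x + toL y := rfl
@[simp] lemma toL_neg (x : FF K) : toL (-x) = -toL x := rfl
@[simp] lemma toL_sub (x y : FF K) : toL (x - y) = toL x - toL y := rfl
lemma toL_eq_zero {x : FF K} : toL x = 0 ↔ x = 0 := Iff.rfl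

/-- The norm `‖x‖ = q ^ (deg x)` on `𝔽_q((z⁻¹))`, where
`deg x = - (order of x as a Laurent series in z⁻¹)`; `‖0‖ = 0`. -/
def fnorm (x : FF K) : ℝ :=
  if toL x = 0 then 0 else (Fintype.card K : ℝ) ^ (-(toL x).order)

lemma one_le_q : (1 : ℝ) ≤ (Fintype.card K : ℝ) := by
  exact_mod_cast Fintype.card_pos

lemma fnorm_nonneg (x : FF K) : 0 ≤ fnorm x := by
  unfold fnorm
  split_ifs
  · exact le_refl 0
  · exact zpow_nonneg (by positivity) _

lemma fnorm_eq_zero {x : FF K} : fnorm x = 0 ↔ x = 0 := by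
  unfold fnorm
  split_ifs with h
  · exact ⟨fun _ => toL_eq_zero.mp h, fun _ => rfl⟩
  · constructor
    · intro hc
      exact absurd hc (zpow_ne_zero _ (by
        have h0 : (0:ℝ) < (Fintype.card K : ℝ) := by positivity
        exact ne_of_gt h0))
    · intro hc
      exact absurd (toL_eq_zero.mpr hc) h

lemma fnorm_neg (x : FF K) : fnorm (-x) = fnorm x := by
  unfold fnorm
  rw [toL_neg]
  simp [neg_eq_zero, HahnSeries.order_neg]

lemma fnorm_add_le (x y : FF K) : fnorm (x + y) ≤ max (fnorm x) (fnorm y) := by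
  by_cases hxy : x + y = 0
  · rw [fnorm_eq_zero.mpr hxy]
    exact le_max_of_le_left (fnorm_nonneg x)
  by_cases hx : x = 0
  · rw [hx, zero_add]
    exact le_max_right _ _
  by_cases hy : y = 0
  · rw [hy, add_zero]
    exact le_max_left _ _
  have horder : min (toL x).order (toL y).order ≤ (toL (x + y)).order := by
    rw [toL_add]
    exact HahnSeries.min_order_le_order_add (show toL x + toL y ≠ 0 from hxy)
  have h1 : fnorm (x + y) = (Fintype.card K : ℝ) ^ (-(toL (x+y)).order) := by
    unfold fnorm
    rw [if_neg (show toL (x + y) ≠ 0 from hxy)]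
  rcases le_total (toL x).order (toL y).order with h | h
  · have h2 : (toL x).order ≤ (toL (x+y)).order := le_trans (by simp [min_eq_left h]) horder
    refine le_max_of_le_left ?_
    rw [h1]
    unfold fnorm
    rw [if_neg (show toL x ≠ 0 from hx)]
    exact zpow_le_zpow_right₀ one_le_q (by omega)
  · have h2 : (toL y).order ≤ (toL (x+y)).order := le_trans (by simp [min_eq_right h]) horder
    refine le_max_of_le_right ?_
    rw [h1]
    unfold fnorm
    rw [if_neg (show toL y ≠ 0 from hy)]
    exact zpow_le_zpow_right₀ one_le_q (by omega)

/-- The (ultra)metric `dist x y = ‖x - y‖` on `𝔽_q((z⁻¹))`. -/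
instance : MetricSpace (FF K) where
  dist x y := fnorm (x - y)
  dist_self x := by
    show fnorm (x - x) = 0
    rw [sub_self]
    exact fnorm_eq_zero.mpr rfl
  dist_comm x y := by
    show fnorm (x - y) = fnorm (y - x)
    have h : x - y = -(y - x) := by ring
    rw [h, fnorm_neg]
  dist_triangle x y z := by
    show fnorm (x - z) ≤ fnorm (x - y) + fnorm (y - z)
    have h : x - z = (x - y) + (y - z) := by ring
    calc fnorm (x - z) ≤ max (fnorm (x - y)) (fnorm (y - z)) := by
          rw [h]; exact fnorm_add_le _ _
      _ ≤ fnorm (x - y) + fnorm (y - z) :=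
        max_le (le_add_of_nonneg_right (fnorm_nonneg _)) (le_add_of_nonneg_left (fnorm_nonneg _))
  eq_of_dist_eq_zero := by
    intro x y h
    have h' : x - y = 0 := fnorm_eq_zero.mp h
    exact sub_eq_zero.mp h'

instance : MeasurableSpace (FF K) := borel _
instance : BorelSpace (FF K) := ⟨rfl⟩

/-- The canonical embedding of the polynomial ring `𝔽_q[z]` into `𝔽_q((z⁻¹))`:
the variable `z` is sent to `t⁻¹ = single (-1) 1`. -/
def polyF (P : Polynomial K) : FF K :=
  Polynomial.aeval (HahnSeries.single (-1 : ℤ) (1 : K)) P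

/-- Supremum norm of a vector with entries in `𝔽_q((z⁻¹))`. -/
def vnorm {ι : Type*} [Fintype ι] (v : ι → FF K) : ℝ := ⨆ i, fnorm (v i)

/-- `⟨v⟩`, the distance from the vector `v` to the nearest polynomial vector. -/
def vdist {ι : Type*} [Fintype ι] (v : ι → FF K) : ℝ :=
  ⨅ y : ι → Polynomial K, vnorm (fun i => v i - polyF (y i))

/-- `⟨x⟩`, the distance from the scalar `x` to the nearest polynomial. -/
def sdist (x : FF K) : ℝ := ⨅ y : Polynomial K, fnorm (x - polyF y)

/-- The fractional part `{x} = Σ_{i ≥ 1} a_i z^{-i}` of `x = Σ_i a_i z^{-i}`. -/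
def fracPart (x : FF K) : FF K :=
  (⟨fun i => if 1 ≤ i then (toL x).coeff i else 0, (toL x).isPWO_support'.mono (by
      intro i hi
      by_cases h : (1:ℤ) ≤ i
      · simpa [Function.mem_support, h] using hi
      · simp [Function.mem_support, h] at hi)⟩ : LaurentSeries K)

/-- The integer part `[x] = Σ_{i ≤ 0} a_i z^{-i}` of `x = Σ_i a_i z^{-i}`, as a polynomial
in `z`. -/
def intPoly (x : FF K) : Polynomial K :=
  ∑ i ∈ Finset.range ((-(toL x).order).toNat + 1),
    Polynomial.monomial i ((toL x).coeff (-(i : ℤ)))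

/-- `x ∈ 𝔽_q((z⁻¹))` is irrational if it is not in `𝔽_q(z)`, i.e. is not a ratio of two
polynomials in `z`. -/
def FIrrational (x : FF K) : Prop :=
  ∀ P Q : Polynomial K, Q ≠ 0 → x * polyF Q ≠ polyF P

section Exponents

variable {m n : ℕ}

/-- The norm `‖x‖ = max_j ‖x_j‖` of a polynomial vector `x`. -/
def pnorm {ι : Type*} [Fintype ι] (x : ι → Polynomial K) : ℝ :=
  vnorm (fun i => (polyF (x i) : FF K))

/-- The system `⟨A x - θ⟩ ≤ H^{-ω}`, `‖x‖ ≤ H` has a polynomial solution `x`. -/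
def Solv (A : Matrix (Fin n) (Fin m) (FF K)) (θ : Fin n → FF K) (ω H : ℝ) : Prop :=
  ∃ x : Fin m → Polynomial K,
    vdist (A.mulVec (fun j => polyF (x j)) - θ) ≤ H ^ (-ω) ∧ pnorm x ≤ H

/-- The system `⟨A x⟩ ≤ H^{-ω}`, `‖x‖ ≤ H` has a nonzero polynomial solution `x`. -/
def SolvHom (A : Matrix (Fin n) (Fin m) (FF K)) (ω H : ℝ) : Prop :=
  ∃ x : Fin m → Polynomial K, x ≠ 0 ∧
    vdist (A.mulVec (fun j => polyF (x j))) ≤ H ^ (-ω) ∧ pnorm x ≤ H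

/-- The inhomogeneous exponent `ω(A, θ)`: the supremum (in `[0,∞]`) of all `ω` such that
for arbitrarily large `H` the system `⟨A x - θ⟩ ≤ H^{-ω}`, `‖x‖ ≤ H` has a polynomial
solution. -/
def omegaInhom (A : Matrix (Fin n) (Fin m) (FF K)) (θ : Fin n → FF K) : ℝ≥0∞ :=
  ⨆ (ω : ℝ) (_ : ∀ H₀ : ℝ, ∃ H : ℝ, H₀ ≤ H ∧ Solv A θ ω H), ENNReal.ofReal ω

/-- The uniform inhomogeneous exponent `ω̂(A, θ)`: as `ω(A, θ)`, but with a solution for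
all sufficiently large `H`. -/
def omegaHatInhom (A : Matrix (Fin n) (Fin m) (FF K)) (θ : Fin n → FF K) : ℝ≥0∞ :=
  ⨆ (ω : ℝ) (_ : ∃ H₀ : ℝ, ∀ H : ℝ, H₀ ≤ H → Solv A θ ω H), ENNReal.ofReal ω

/-- The homogeneous exponent `ω(A)`. -/
def omegaHom (A : Matrix (Fin n) (Fin m) (FF K)) : ℝ≥0∞ :=
  ⨆ (ω : ℝ) (_ : ∀ H₀ : ℝ, ∃ H : ℝ, H₀ ≤ H ∧ SolvHom A ω H), ENNReal.ofReal ω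

/-- The uniform homogeneous exponent `ω̂(A)`. -/
def omegaHatHom (A : Matrix (Fin n) (Fin m) (FF K)) : ℝ≥0∞ :=
  ⨆ (ω : ℝ) (_ : ∃ H₀ : ℝ, ∀ H : ℝ, H₀ ≤ H → SolvHom A ω H), ENNReal.ofReal ω

/-- `A` is non-degenerate: the `𝔽_q[z]`-module `Aᵀ 𝔽_q[z]ⁿ + 𝔽_q[z]^m ⊆ 𝔽_q((z⁻¹))^m` has
rank `m + n` over `𝔽_q[z]`, i.e. its `m + n` natural generators are linearly independent
over `𝔽_q[z]`; equivalently, no nonzero polynomial vector `u` makes `Aᵀ u` a polynomial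
vector. -/
def Nondegenerate (A : Matrix (Fin n) (Fin m) (FF K)) : Prop :=
  ∀ u : Fin n → Polynomial K,
    (∃ v : Fin m → Polynomial K,
      A.transpose.mulVec (fun i => polyF (u i)) = fun j => polyF (v j)) → u = 0

/-- `liminf_{x ∈ 𝔽_q[z]^m, ‖x‖ → ∞} ‖x‖^{m/n} ⟨A x - θ⟩`, computed in `[0, ∞]`. -/
def badLiminf (A : Matrix (Fin n) (Fin m) (FF K)) (θ : Fin n → FF K) : ℝ≥0∞ :=
  Filter.liminf
    (fun x : Fin m → Polynomial K =>
      ENNReal.ofReal ((pnorm x) ^ ((m : ℝ) / (n : ℝ)) *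
        vdist (A.mulVec (fun j => polyF (x j)) - θ)))
    (Filter.comap (fun x : Fin m → Polynomial K => pnorm x) Filter.atTop)

/-- The set `Bad^ε(A)` of `θ` in the unit polydisc `𝕀ⁿ` with
`liminf_{‖x‖ → ∞} ‖x‖^{m/n} ⟨A x - θ⟩ ≥ ε`. -/
def Bad (A : Matrix (Fin n) (Fin m) (FF K)) (ε : ℝ) : Set (Fin n → FF K) :=
  {θ | (∀ i, fnorm (θ i) < 1) ∧ ENNReal.ofReal ε ≤ badLiminf A θ}

/-- The set `Bad(A) = ⋃_{ε > 0} Bad^ε(A)`. -/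
def BadAll (A : Matrix (Fin n) (Fin m) (FF K)) : Set (Fin n → FF K) :=
  ⋃ (ε : ℝ) (_ : 0 < ε), Bad A ε

/-- `M(y) = ⟨Aᵀ y⟩` for a polynomial vector `y`. -/
def Mfun (A : Matrix (Fin n) (Fin m) (FF K)) (y : Fin n → Polynomial K) : ℝ :=
  vdist (A.transpose.mulVec (fun i => polyF (y i)))

/-- `y 1, y 2, …` is a sequence of best approximations related to `Aᵀ`:
`1 = Y_1 < Y_2 < ⋯`, `M_1 > M_2 > ⋯`, and `M(x) ≥ M_k` for every nonzero polynomial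
vector `x` with `‖x‖ < Y_{k+1}` (the value `y 0` is irrelevant). -/
def IsBestApproxSeq (A : Matrix (Fin n) (Fin m) (FF K))
    (y : ℕ → Fin n → Polynomial K) : Prop :=
  pnorm (y 1) = 1 ∧
  (∀ k, 1 ≤ k → pnorm (y k) < pnorm (y (k + 1))) ∧
  (∀ k, 1 ≤ k → Mfun A (y (k + 1)) < Mfun A (y k)) ∧
  (∀ k, 1 ≤ k → ∀ x : Fin n → Polynomial K, x ≠ 0 → pnorm x < pnorm (y (k + 1)) →
    Mfun A (y k) ≤ Mfun A x)

end Exponents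

section Scalar

/-- The system `⟨ξ x - θ⟩ ≤ H^{-ω}`, `‖x‖ ≤ H` has a polynomial solution `x`. -/
def sSolv (ξ θ : FF K) (ω H : ℝ) : Prop :=
  ∃ x : Polynomial K, sdist (ξ * polyF x - θ) ≤ H ^ (-ω) ∧ fnorm (polyF x) ≤ H

/-- The scalar inhomogeneous exponent `ω((ξ), θ)`. -/
def somegaInhom (ξ θ : FF K) : ℝ≥0∞ :=
  ⨆ (ω : ℝ) (_ : ∀ H₀ : ℝ, ∃ H : ℝ, H₀ ≤ H ∧ sSolv ξ θ ω H), ENNReal.ofReal ω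

/-- The scalar uniform inhomogeneous exponent `ω̂((ξ), θ)`. -/
def somegaHatInhom (ξ θ : FF K) : ℝ≥0∞ :=
  ⨆ (ω : ℝ) (_ : ∃ H₀ : ℝ, ∀ H : ℝ, H₀ ≤ H → sSolv ξ θ ω H), ENNReal.ofReal ω

/-- The scalar homogeneous exponent `ω((ξ))`. -/
def somegaHom (ξ : FF K) : ℝ≥0∞ :=
  ⨆ (ω : ℝ) (_ : ∀ H₀ : ℝ, ∃ H : ℝ, H₀ ≤ H ∧ ∃ x : Polynomial K, x ≠ 0 ∧
      sdist (ξ * polyF x) ≤ H ^ (-ω) ∧ fnorm (polyF x) ≤ H), ENNReal.ofReal ω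

/-- `liminf_{x ∈ 𝔽_q[z], ‖x‖ → ∞} ‖x‖ ⟨α x - θ⟩`, computed in `[0, ∞]`. -/
def sBadLiminf (α θ : FF K) : ℝ≥0∞ :=
  Filter.liminf
    (fun x : Polynomial K => ENNReal.ofReal (fnorm (polyF x) * sdist (α * polyF x - θ)))
    (Filter.comap (fun x : Polynomial K => fnorm (polyF x)) Filter.atTop)

/-- The set `Bad^ε(α)` of `θ ∈ 𝕀` with `liminf_{‖x‖ → ∞} ‖x‖ ⟨α x - θ⟩ ≥ ε`. -/
def sBad (α : FF K) (ε : ℝ) : Set (FF K) :=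
  {θ | fnorm θ < 1 ∧ ENNReal.ofReal ε ≤ sBadLiminf α θ}

end Scalar

section CF

/-- The Gauss map `T x = 1/x - [1/x]` on `𝔽_q((z⁻¹))`. -/
def gaussMap (x : FF K) : FF K := fracPart x⁻¹

/-- `pquot α k` is the `(k+1)`-st partial quotient `A_{k+1} = [1 / T^k α]` of the
continued fraction expansion of `α`. -/
def pquot (α : FF K) (k : ℕ) : Polynomial K := intPoly ((gaussMap^[k] α)⁻¹)

/-- `cfQ α k` is the denominator `Q_k` of the `k`-th convergent of the continued fraction
expansion of `α`: `Q_0 = 1`, `Q_1 = A_1`, `Q_{k+2} = A_{k+2} Q_{k+1} + Q_k`. -/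
def cfQ (α : FF K) : ℕ → Polynomial K
  | 0 => 1
  | 1 => pquot α 0
  | (k + 2) => pquot α (k + 1) * cfQ α (k + 1) + cfQ α k

/-- `α` is singular on average: for every `c > 0` the proportion of `l ∈ {1, …, N}` for
which `‖{Q α}‖ ≤ c 2^{-l}` has a solution `Q ∈ 𝔽_q[z]` with `0 < ‖Q‖ ≤ 2^l` tends to `1`
as `N → ∞`. -/
def SingularOnAverage (α : FF K) : Prop :=
  ∀ c : ℝ, 0 < c →
    Filter.Tendsto
      (fun N : ℕ =>
        (((Finset.Icc 1 N).filter (fun l : ℕ =>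
            ∃ Q : Polynomial K, Q ≠ 0 ∧ fnorm (polyF Q) ≤ 2 ^ l ∧
              fnorm (fracPart (polyF Q * α)) ≤ c / 2 ^ l)).card : ℝ) / (N : ℝ))
      Filter.atTop (nhds 1)

end CF

end FPSDA

open FPSDA MeasureTheory

namespace FPSDA

variable {K : Type*} [Field K] [Fintype K]

def hcf (l : ℤ) : FF K →+ K where
  toFun x := (toL x).coeff l
  map_zero' := by simp
  map_add' x y := by simp

lemma h_one_lt_q : (1 : ℝ) < (Fintype.card K : ℝ) := by
  exact_mod_cast Fintype.one_lt_card

lemma h_fnorm_lt_iff (x : FF K) (l : ℤ) :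
    fnorm x < (Fintype.card K : ℝ) ^ (-l) ↔ ∀ i ≤ l, hcf i x = 0 := by
  have hq := h_one_lt_q (K := K)
  by_cases hx : toL x = 0
  · have : fnorm x = 0 := by simp [fnorm, hx]
    rw [this]
    refine ⟨fun _ i _ => ?_, fun _ => by positivity⟩
    show (toL x).coeff i = 0
    rw [hx]; rfl
  · have : fnorm x = (Fintype.card K : ℝ) ^ (-(toL x).order) := by simp [fnorm, hx]
    rw [this, zpow_lt_zpow_iff_right₀ hq]
    constructor
    · intro h i hi
      exact HahnSeries.coeff_eq_zero_of_lt_order (by omega)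
    · intro h
      by_contra hc
      have h2 := h (toL x).order (by omega)
      exact hx (HahnSeries.coeff_order_eq_zero.mp h2)

lemma h_fnorm_mul (x y : FF K) : fnorm (x * y) = fnorm x * fnorm y := by
  have hq := h_one_lt_q (K := K)
  by_cases hx : x = 0
  · simp [hx, fnorm_eq_zero.mpr]
  by_cases hy : y = 0
  · simp [hy, fnorm_eq_zero.mpr]
  unfold fnorm
  rw [if_neg (show toL x ≠ 0 from hx), if_neg (show toL y ≠ 0 from hy),
    if_neg (show toL (x * y) ≠ 0 from mul_ne_zero (M₀ := FF K) hx hy),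
    show toL (x * y) = toL x * toL y from rfl,
    HahnSeries.order_mul (show toL x ≠ 0 from hx) (show toL y ≠ 0 from hy), neg_add,
    zpow_add₀ (by positivity)]

lemma h_polyF_add (P Q : Polynomial K) : polyF (P + Q) = polyF P + polyF Q :=
  map_add (Polynomial.aeval (HahnSeries.single (-1 : ℤ) (1 : K))) P Q

lemma h_polyF_mul (P Q : Polynomial K) : polyF (P * Q) = polyF P * polyF Q :=
  map_mul (Polynomial.aeval (HahnSeries.single (-1 : ℤ) (1 : K))) P Q

lemma h_polyF_monomial (i : ℕ) (c : K) :
    toL (polyF (Polynomial.monomial i c)) = HahnSeries.single (-(i : ℤ)) c := by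
  unfold toL polyF
  rw [Polynomial.aeval_monomial, HahnSeries.single_pow, HahnSeries.algebraMap_apply',
    show algebraMap K (PowerSeries K) c = PowerSeries.C c from rfl, HahnSeries.ofPowerSeries_C]
  simp [HahnSeries.C_apply]

lemma h_coeff_polyF (P : Polynomial K) (l : ℤ) :
    hcf l (polyF P) = if l ≤ 0 then P.coeff (-l).toNat else 0 := by
  induction P using Polynomial.induction_on' with
  | add p q hp hq =>
    rw [h_polyF_add, map_add, hp, hq]; split_ifs <;> simp
  | monomial i c =>
    show (toL (polyF (Polynomial.monomial i c))).coeff l = _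
    rw [h_polyF_monomial, HahnSeries.coeff_single, Polynomial.coeff_monomial]
    split_ifs <;> first | rfl | omega

lemma h_intPoly_coeff (x : FF K) (i : ℕ) : (intPoly x).coeff i = hcf (-(i : ℤ)) x := by
  unfold intPoly
  rw [Polynomial.finset_sum_coeff]
  simp only [Polynomial.coeff_monomial]
  rw [Finset.sum_ite_eq' ]
  split_ifs with h
  · rfl
  · symm
    apply HahnSeries.coeff_eq_zero_of_lt_order
    simp at h
    omega

lemma h_exists_poly (x : FF K) : ∃ P : Polynomial K, fnorm (x - polyF P) < 1 := by
  refine ⟨intPoly x, ?_⟩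
  have := (h_fnorm_lt_iff (x - polyF (intPoly x)) 0).mpr (by
    intro i hi
    rw [map_sub, h_coeff_polyF, if_pos hi, h_intPoly_coeff, Int.toNat_of_nonneg (by omega)]
    simp)
  simpa using this

lemma h_sdist_lt (x : FF K) (k : ℕ) (h : sdist x < (Fintype.card K : ℝ) ^ (-(k : ℤ)))
    (l : ℤ) (h1 : 1 ≤ l) (h2 : l ≤ k) : hcf l x = 0 := by
  obtain ⟨P, hP⟩ := exists_lt_of_ciInf_lt h
  have := (h_fnorm_lt_iff _ _).mp hP l h2
  rw [map_sub, h_coeff_polyF, if_neg (by omega), sub_zero] at this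
  exact this

lemma h_measurable (a : FF K) (l : ℤ) : @Measurable _ _ _ ⊤ (fun x : FF K => hcf l (a * x)) := by
  intro s _
  apply IsOpen.measurableSet
  rw [Metric.isOpen_iff]
  intro x hx
  have hq := h_one_lt_q (K := K)
  have ha := fnorm_nonneg a
  refine ⟨(Fintype.card K : ℝ) ^ (-l) / (fnorm a + 1), by positivity, ?_⟩
  intro z hz
  have hz' : fnorm (z - x) < (Fintype.card K : ℝ) ^ (-l) / (fnorm a + 1) := hz
  rw [lt_div_iff₀ (by positivity)] at hz'
  have h3 : fnorm (a * (z - x)) < (Fintype.card K : ℝ) ^ (-l) := by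
    rw [h_fnorm_mul]
    nlinarith [fnorm_nonneg (z - x)]
  have h4 := (h_fnorm_lt_iff _ _).mp h3 l le_rfl
  rw [mul_sub, map_sub, sub_eq_zero] at h4
  simp only [Set.mem_preimage] at hx ⊢
  rwa [h4]

/-- coefficient map -/
def hphi {n : ℕ} (y : Fin n → Polynomial K) (k : ℕ) : (Fin n → FF K) → (Fin k → K) :=
  fun θ l => ∑ j, hcf ((l : ℤ) + 1) (polyF (y j) * θ j)

lemma hphi_add {n : ℕ} (y : Fin n → Polynomial K) (k : ℕ) (a b : Fin n → FF K) :
    hphi y k (a + b) = hphi y k a + hphi y k b := by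
  ext l
  simp [hphi, mul_add, Finset.sum_add_distrib]

lemma hphi_measurable {n : ℕ} (y : Fin n → Polynomial K) (k : ℕ) (v : Fin k → K) :
    MeasurableSet (hphi y k ⁻¹' {v}) := by
  letI : MeasurableSpace K := ⊤
  have : Measurable (hphi y k) := by
    rw [measurable_pi_iff]
    intro l
    unfold hphi
    refine Finset.measurable_sum _ fun j _ => ?_
    exact (h_measurable (polyF (y j)) _).comp (measurable_pi_apply j)
  exact this (measurableSet_singleton v)

def hI (n : ℕ) : Set (Fin n → FF K) := {θ | ∀ i, fnorm (θ i) < 1}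

lemma hI_measurable (n : ℕ) : MeasurableSet (hI (K := K) n) := by
  have : hI (K := K) n = ⋂ i, (fun θ : Fin n → FF K => θ i) ⁻¹' Metric.ball 0 1 := by
    ext θ
    simp only [hI, Set.mem_setOf_eq, Set.mem_iInter, Set.mem_preimage, Metric.mem_ball]
    refine forall_congr' fun i => ?_
    show _ ↔ fnorm (θ i - 0) < 1
    rw [sub_zero]
  rw [this]
  exact MeasurableSet.iInter fun i => measurable_pi_apply i Metric.isOpen_ball.measurableSet

lemma hI_add {n : ℕ} {a b : Fin n → FF K} (ha : a ∈ hI n) (hb : b ∈ hI n) : a + b ∈ hI n :=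
  fun i => lt_of_le_of_lt (fnorm_add_le _ _) (max_lt (ha i) (hb i))

lemma hI_neg {n : ℕ} {a : Fin n → FF K} (ha : a ∈ hI n) : -a ∈ hI n :=
  fun i => by rw [Pi.neg_apply, fnorm_neg]; exact ha i

lemma h_section {n : ℕ} (y : Fin n → Polynomial K) (k : ℕ) (j : Fin n)
    (hj : 1 ≤ fnorm (polyF (y j))) (v : Fin k → K) :
    ∃ a ∈ hI (K := K) n, hphi y k a = v := by
  have hp : (polyF (y j) : FF K) ≠ 0 := by
    intro h; rw [fnorm_eq_zero.mpr h] at hj; linarith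
  let w : FF K := ∑ l : Fin k, (show FF K from HahnSeries.single ((l : ℤ) + 1) (v l))
  have hw : ∀ i : ℤ, hcf i w = ∑ l : Fin k, if i = (l : ℤ) + 1 then v l else 0 := by
    intro i
    rw [map_sum]
    refine Finset.sum_congr rfl fun l _ => ?_
    show (HahnSeries.single ((l : ℤ) + 1) (v l) : LaurentSeries K).coeff i = _
    rw [HahnSeries.coeff_single]
    split_ifs <;> rfl
  have hw1 : fnorm w < 1 := by
    have := (h_fnorm_lt_iff w 0).mpr (by
      intro i hi
      rw [hw]
      refine Finset.sum_eq_zero fun l _ => ?_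
      rw [if_neg (by omega)])
    simpa using this
  have hmul : polyF (y j) * ((polyF (y j))⁻¹ * w) = w := mul_inv_cancel_left₀ hp w
  refine ⟨Pi.single j ((polyF (y j))⁻¹ * w), ?_, ?_⟩
  · intro i
    by_cases h : i = j
    · subst h
      rw [Pi.single_eq_same]
      have h2 := h_fnorm_mul (polyF (y i)) ((polyF (y i))⁻¹ * w)
      rw [hmul] at h2
      nlinarith [fnorm_nonneg ((polyF (y i))⁻¹ * w)]
    · rw [Pi.single_eq_of_ne h, fnorm_eq_zero.mpr rfl]; norm_num
  · ext l
    unfold hphi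
    rw [Finset.sum_eq_single j]
    · rw [Pi.single_eq_same, hmul, hw, Finset.sum_eq_single l]
      · simp
      · intro b _ hb
        rw [if_neg]
        intro h
        apply hb
        ext
        omega
      · simp
    · intro b _ hb
      rw [Pi.single_eq_of_ne hb]; simp
    · simp

lemma h_measure {n : ℕ} (μ : Measure (Fin n → FF K))
    (hinv : ∀ a : Fin n → FF K, ∀ s : Set (Fin n → FF K), MeasurableSet s →
      μ ((fun θ => a + θ) ⁻¹' s) = μ s)
    (hone : μ (hI n) = 1)
    (y : Fin n → Polynomial K) (k : ℕ) (j : Fin n)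
    (hj : 1 ≤ fnorm (polyF (y j))) :
    μ (hI n ∩ hphi y k ⁻¹' {0}) = ENNReal.ofReal ((Fintype.card K : ℝ) ^ (-(k : ℤ))) := by
  have hq := h_one_lt_q (K := K)
  have hmeas : ∀ v, MeasurableSet (hI n ∩ hphi y k ⁻¹' {v}) := fun v =>
    (hI_measurable n).inter (hphi_measurable y k v)
  have heq : ∀ v, μ (hI n ∩ hphi y k ⁻¹' {v}) = μ (hI n ∩ hphi y k ⁻¹' {0}) := by
    intro v
    obtain ⟨a, ha, hav⟩ := h_section y k j hj v
    rw [← hinv a _ (hmeas v)]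
    congr 1
    ext θ
    simp only [Set.mem_preimage, Set.mem_inter_iff, Set.mem_singleton_iff, hphi_add, hav,
      add_eq_left]
    refine and_congr_left fun _ => ⟨fun h => ?_, fun h => hI_add ha h⟩
    have := hI_add (hI_neg ha) h
    simpa using this
  have hU : hI n = ⋃ v : Fin k → K, (hI n ∩ hphi y k ⁻¹' {v}) := by
    ext θ; simp
  have hs : μ (hI n) = ∑ v : Fin k → K, μ (hI n ∩ hphi y k ⁻¹' {v}) := by
    conv_lhs => rw [hU]
    rw [measure_iUnion _ hmeas, tsum_fintype]
    intro v w hvw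
    refine Set.disjoint_left.mpr fun θ h1 h2 => hvw ?_
    exact h1.2.symm.trans h2.2
  simp only [heq, hone, Finset.sum_const, Finset.card_univ, Fintype.card_fun, Fintype.card_fin,
    nsmul_eq_mul] at hs
  rw [zpow_neg, ENNReal.ofReal_inv_of_pos (by positivity)]
  apply ENNReal.eq_inv_of_mul_eq_one_left
  rw [mul_comm, hs, zpow_natCast, ← Nat.cast_pow, ENNReal.ofReal_natCast]

lemma h_pnorm_attain {n : ℕ} (hn : 0 < n) (y : Fin n → Polynomial K) :
    ∃ j, fnorm (polyF (y j)) = pnorm y := by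
  haveI : Nonempty (Fin n) := ⟨⟨0, hn⟩⟩
  exact exists_eq_ciSup_of_finite (f := fun i => fnorm (polyF (y i) : FF K))

lemma h_fnorm_gap (x : FF K) (a : ℤ) (h : (Fintype.card K : ℝ) ^ a < fnorm x) :
    (Fintype.card K : ℝ) ^ (a + 1) ≤ fnorm x := by
  have hq := h_one_lt_q (K := K)
  by_cases hx : toL x = 0
  · have : fnorm x = 0 := by simp [fnorm, hx]
    rw [this] at h
    have : 0 < (Fintype.card K : ℝ) ^ a := by positivity
    linarith
  · have : fnorm x = (Fintype.card K : ℝ) ^ (-(toL x).order) := by simp [fnorm, hx]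
    rw [this] at h ⊢
    rw [zpow_lt_zpow_iff_right₀ hq] at h
    exact zpow_le_zpow_right₀ hq.le (by omega)

lemma h_growth {n : ℕ} (hn : 0 < n) (y : ℕ → Fin n → Polynomial K) (h1 : pnorm (y 1) = 1)
    (h2 : ∀ k, 1 ≤ k → pnorm (y k) < pnorm (y (k + 1))) (i : ℕ) :
    (Fintype.card K : ℝ) ^ (i : ℤ) ≤ pnorm (y (i + 1)) := by
  induction i with
  | zero => simp [h1]
  | succ i ih =>
    obtain ⟨j, hj⟩ := h_pnorm_attain hn (y (i + 1 + 1))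
    rw [← hj]
    push_cast
    apply h_fnorm_gap
    rw [hj]
    exact lt_of_le_of_lt ih (h2 (i + 1) (by omega))

lemma h_polyF_sum {n : ℕ} (y p : Fin n → Polynomial K) (l : ℤ) (hl : 1 ≤ l) :
    ∑ j, hcf l (polyF (y j) * polyF (p j)) = 0 := by
  refine Finset.sum_eq_zero fun j _ => ?_
  rw [← h_polyF_mul, h_coeff_polyF, if_neg (by omega)]

lemma h_countable : Countable (Polynomial K) := by
  haveI : Countable K := inferInstance
  have : Function.Injective (fun P : Polynomial K => P.toFinsupp.coeff) := by
    intro P Q h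
    ext i
    exact DFunLike.congr_fun h i
  exact this.countable

lemma h_fixed {n : ℕ} (hn : 0 < n) (y : ℕ → Fin n → Polynomial K)
    (h1 : pnorm (y 1) = 1) (h2 : ∀ k, 1 ≤ k → pnorm (y k) < pnorm (y (k + 1)))
    (μ : Measure (Fin n → FF K))
    (hinv : ∀ a : Fin n → FF K, ∀ s : Set (Fin n → FF K), MeasurableSet s →
      μ ((fun θ => a + θ) ⁻¹' s) = μ s)
    (hone : μ (hI n) = 1) (δ : ℝ) (hδ : 0 < δ) :
    ∀ᵐ θ ∂μ, ∃ i₀, ∀ i, i₀ ≤ i →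
        pnorm (y (i + 1)) ^ (-δ) ≤ sdist (∑ j, polyF (y (i + 1) j) * θ j) := by
  have hq := h_one_lt_q (K := K)
  have hg := h_growth hn y h1 h2
  haveI := h_countable (K := K)
  let k : ℕ → ℕ := fun i => ⌊δ * i⌋₊
  let S : ℕ → Set (Fin n → FF K) := fun i => hI n ∩ hphi (y (i + 1)) (k i) ⁻¹' {0}
  have hSm : ∀ i, MeasurableSet (S i) := fun i =>
    (hI_measurable n).inter (hphi_measurable _ _ _)
  have hSμ : ∀ i, μ (S i) = ENNReal.ofReal ((Fintype.card K : ℝ) ^ (-(k i : ℤ))) := by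
    intro i
    obtain ⟨j, hj⟩ := h_pnorm_attain hn (y (i + 1))
    refine h_measure μ hinv hone _ _ j ?_
    rw [hj]
    exact le_trans (one_le_zpow₀ hq.le (by positivity)) (hg i)
  have hsum : Summable (fun i => (Fintype.card K : ℝ) ^ (-(k i : ℤ))) := by
    have hlt : (Fintype.card K : ℝ) ^ (-δ) < 1 := Real.rpow_lt_one_of_one_lt_of_neg hq (by linarith)
    refine Summable.of_nonneg_of_le (fun i => by positivity) (fun i => ?_)
      ((summable_geometric_of_lt_one (by positivity) hlt).mul_left (Fintype.card K : ℝ))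
    rw [← Real.rpow_natCast, ← Real.rpow_mul (by positivity), ← Real.rpow_intCast]
    nth_rewrite 2 [← Real.rpow_one (Fintype.card K : ℝ)]
    rw [← Real.rpow_add (by positivity)]
    apply Real.rpow_le_rpow_of_exponent_le hq.le
    have := Nat.lt_floor_add_one (δ * i)
    push_cast
    simp only [k]
    linarith
  have hlim : μ (limsup S atTop) = 0 := by
    apply measure_limsup_atTop_eq_zero
    simp only [hSμ]
    exact hsum.tsum_ofReal_ne_top
  have hlm : MeasurableSet (limsup S atTop) := MeasurableSet.measurableSet_limsup hSm
  rw [ae_iff]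
  refine measure_mono_null (t := ⋃ p : Fin n → Polynomial K,
    (fun θ => (fun j => -polyF (p j)) + θ) ⁻¹' (limsup S atTop)) ?_ ?_
  · intro θ hθ
    simp only [Set.mem_setOf_eq, not_exists, not_forall, not_le] at hθ
    choose p hp using fun j => h_exists_poly (θ j)
    refine Set.mem_iUnion.mpr ⟨p, ?_⟩
    rw [Set.mem_preimage, Filter.mem_limsup_iff_frequently_mem, Filter.frequently_atTop]
    intro i₀
    obtain ⟨i, hi, hlt⟩ := hθ i₀
    refine ⟨i, hi, ?_, ?_⟩
    · intro j
      have := hp j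
      rwa [sub_eq_neg_add] at this
    · have hlt2 : sdist (∑ j, polyF (y (i + 1) j) * θ j) <
          (Fintype.card K : ℝ) ^ (-(k i : ℤ)) := by
        refine lt_of_lt_of_le hlt ?_
        refine le_trans (Real.rpow_le_rpow_of_nonpos (by positivity) (hg i) (by linarith)) ?_
        rw [← Real.rpow_intCast, ← Real.rpow_intCast, ← Real.rpow_mul (by positivity)]
        apply Real.rpow_le_rpow_of_exponent_le hq.le
        have := Nat.floor_le (show 0 ≤ δ * i by positivity)
        push_cast
        simp only [k]
        linarith
      rw [Set.mem_preimage, Set.mem_singleton_iff]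
      ext l
      have h5 := h_sdist_lt _ _ hlt2 ((l : ℤ) + 1) (by omega) (by omega)
      rw [map_sum] at h5
      have h6 := h_polyF_sum (y (i + 1)) p ((l : ℤ) + 1) (by omega)
      simp only [hphi, Pi.add_apply, mul_add, map_add, mul_neg, map_neg, Finset.sum_add_distrib,
        Finset.sum_neg_distrib, h5, h6, Pi.zero_apply, neg_zero, add_zero]
  · rw [measure_iUnion_null_iff]
    intro p
    rw [hinv _ _ hlm, hlim]

end FPSDA

/-- For a sequence of best approximations `(y_i)_{i ≥ 1}` related to `Aᵀ` and almost all
`θ` with respect to the Haar measure on `𝔽_q((z⁻¹))ⁿ` (formalized as: any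
translation-invariant Borel measure normalized on the unit polydisc), for every `δ > 0`
one has `⟨y_{i1}θ₁ + ⋯ + y_{in}θ_n⟩ ≥ Y_i^{-δ}` for all sufficiently large `i`. -/
theorem best_approx_ae {K : Type*} [Field K] [Fintype K] {m n : ℕ}
    (hm : 0 < m) (hn : 0 < n)
    (A : Matrix (Fin n) (Fin m) (FF K)) (hA : Nondegenerate A)
    (y : ℕ → Fin n → Polynomial K) (hy : IsBestApproxSeq A y)
    (μ : Measure (Fin n → FF K))
    (hinv : ∀ a : Fin n → FF K, ∀ s : Set (Fin n → FF K), MeasurableSet s →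
      μ ((fun θ => a + θ) ⁻¹' s) = μ s)
    (hone : μ {θ : Fin n → FF K | ∀ i, fnorm (θ i) < 1} = 1) :
    ∀ᵐ θ ∂μ, ∀ δ : ℝ, 0 < δ →
      ∃ i₀, ∀ i, i₀ ≤ i → 1 ≤ i →
        pnorm (y i) ^ (-δ) ≤ sdist (∑ j, polyF (y i j) * θ j) := by
  obtain ⟨h1, h2, -, -⟩ := hy
  have hq := h_one_lt_q (K := K)
  have h := fun N : ℕ => h_fixed hn y h1 h2 μ hinv hone (1 / ((N : ℝ) + 1)) (by positivity)
  rw [← ae_all_iff] at h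
  filter_upwards [h] with θ hθ δ hδ
  obtain ⟨N, hN⟩ := exists_nat_one_div_lt hδ
  obtain ⟨i₀, hi⟩ := hθ N
  refine ⟨i₀ + 1, fun i hi1 _ => ?_⟩
  obtain ⟨i, rfl⟩ : ∃ i', i = i' + 1 := ⟨i - 1, by omega⟩
  refine le_trans ?_ (hi i (by omega))
  apply Real.rpow_le_rpow_of_exponent_le
  · exact le_trans (one_le_zpow₀ hq.le (by positivity)) (h_growth hn y h1 h2 i)
  · linarith
end
end

section
/- Let n ≥ 1 be an integer and δ ∈ (0, q^{−1}]. Let (h_k)_{k≥1} be a sequence of polynomial vectors in 𝔽_q[z]ⁿ such that ‖h_{k+1}‖/‖h_k‖ ≥ q·δ^{−1} for all k ≥ 1 and ‖h_k‖^{1/k} → ∞ as k → ∞. Then the set S_δ = {θ ∈ 𝕀ⁿ : there exists k_0(θ) such that ⟨h_k·θ⟩ ≥ δ for all k ≥ k_0(θ)} has Hausdorff dimension n, where h_k·θ = h_{k1}θ_1 + ⋯ + h_{kn}θ_n. -/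
/-!
Common setup: the field `𝔽_q((z⁻¹))` of formal power series over a finite field `K` of
cardinality `q`, modeled as the field `FF K` of formal Laurent series in `t = z⁻¹`,
together with its non-Archimedean norm, the embedding of the polynomial ring `𝔽_q[z]`,
distances to polynomial (vectors), Diophantine exponents, `Bad` sets, continued fractions
and best approximation sequences.
-/

open scoped Classical ENNReal NNReal
open Filter

noncomputable section

set_option linter.unusedSectionVars false

open FPSDA MeasureTheory

section Aux

variable {K : Type*} [Field K] [Fintype K]

lemma aux_q_gt : (1:ℝ) < (Fintype.card K : ℝ) := by
  exact_mod_cast Fintype.one_lt_card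

lemma aux_fnorm_le_iff (x : FF K) (N : ℤ) :
    fnorm x ≤ (Fintype.card K : ℝ) ^ (-N) ↔ ∀ i < N, (toL x).coeff i = 0 := by
  have hq := aux_q_gt (K := K)
  unfold fnorm
  split_ifs with hx
  · simp only [hx, HahnSeries.coeff_zero, implies_true, iff_true]
    positivity
  · rw [zpow_le_zpow_iff_right₀ hq, ← HahnSeries.le_order_iff_forall hx]
    omega

lemma aux_polyF_eq (P : Polynomial K) (N : ℕ) (hN : P.natDegree < N) :
    toL (polyF P) = ∑ m ∈ Finset.range N, HahnSeries.single (-(m:ℤ)) (P.coeff m) := by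
  show Polynomial.aeval (HahnSeries.single (-1 : ℤ) (1 : K)) P = _
  rw [Polynomial.aeval_eq_sum_range' hN]
  refine Finset.sum_congr rfl fun m _ => ?_
  rw [HahnSeries.single_pow]
  rw [Algebra.smul_def, HahnSeries.algebraMap_apply', PowerSeries.algebraMap_apply,
    Algebra.algebraMap_self, RingHom.id_apply, HahnSeries.ofPowerSeries_C, HahnSeries.C_apply,
    HahnSeries.single_mul_single]
  simp

lemma aux_coeff_sum {ι : Type*} (s : Finset ι) (f : ι → LaurentSeries K) (i : ℤ) :
    (∑ m ∈ s, f m).coeff i = ∑ m ∈ s, (f m).coeff i := by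
  induction s using Finset.induction_on with
  | empty => simp
  | insert a s ha ih => rw [Finset.sum_insert ha, Finset.sum_insert ha, HahnSeries.coeff_add, ih]

lemma aux_toL_sum {ι : Type*} (s : Finset ι) (f : ι → FF K) :
    toL (∑ m ∈ s, f m) = ∑ m ∈ s, toL (f m) := rfl

lemma aux_coeff_polyF_pos (P : Polynomial K) (i : ℤ) (hi : 0 < i) :
    (toL (polyF P)).coeff i = 0 := by
  rw [aux_polyF_eq P _ (Nat.lt_succ_self _), aux_coeff_sum]
  refine Finset.sum_eq_zero fun m _ => ?_
  rw [HahnSeries.coeff_single_of_ne]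
  omega

lemma aux_coeff_polyF_neg (P : Polynomial K) (j : ℕ) :
    (toL (polyF P)).coeff (-(j:ℤ)) = P.coeff j := by
  rw [aux_polyF_eq P (P.natDegree + j + 1) (by omega), aux_coeff_sum]
  rw [Finset.sum_eq_single j]
  · simp
  · intro m _ hm
    rw [HahnSeries.coeff_single_of_ne]
    omega
  · intro hj
    simp at hj

lemma aux_coeff_polyF_mul (P : Polynomial K) (x : FF K) (N : ℕ) (hN : P.natDegree < N) :
    (toL (polyF P * x)).coeff 1 =
      ∑ m ∈ Finset.range N, P.coeff m * (toL x).coeff ((m:ℤ) + 1) := by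
  have : toL (polyF P * x) = toL (polyF P) * toL x := rfl
  rw [this, aux_polyF_eq P N hN, Finset.sum_mul, aux_coeff_sum]
  refine Finset.sum_congr rfl fun m _ => ?_
  rw [HahnSeries.coeff_single_mul]
  congr 2
  ring

lemma aux_sdist (x : FF K) (hx : (toL x).coeff 1 ≠ 0) :
    (Fintype.card K : ℝ)⁻¹ ≤ sdist x := by
  have hq := aux_q_gt (K := K)
  refine le_ciInf fun y => ?_
  by_contra hlt
  push Not at hlt
  have h2 : (toL (x - polyF y)).coeff 1 ≠ 0 := by
    rw [toL_sub, HahnSeries.coeff_sub, aux_coeff_polyF_pos y 1 one_pos]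
    simpa using hx
  have h0 : toL (x - polyF y) ≠ 0 := by
    intro h; rw [h] at h2; simp at h2
  have hle : (toL (x - polyF y)).order ≤ 1 := HahnSeries.order_le_of_coeff_ne_zero h2
  unfold fnorm at hlt
  rw [if_neg h0, ← zpow_neg_one, zpow_lt_zpow_iff_right₀ hq] at hlt
  omega

lemma aux_fnorm_polyF_le (P : Polynomial K) (N : ℕ) :
    fnorm (polyF P) ≤ (Fintype.card K : ℝ) ^ N ↔ P.natDegree ≤ N := by
  have := aux_fnorm_le_iff (polyF P) (-(N:ℤ))
  rw [neg_neg, zpow_natCast] at this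
  rw [this, Polynomial.natDegree_le_iff_coeff_eq_zero]
  constructor
  · intro h m hm
    rw [← aux_coeff_polyF_neg]
    exact h _ (by omega)
  · intro h i hi
    obtain ⟨j, rfl⟩ : ∃ j : ℕ, i = -(j:ℤ) := ⟨(-i).toNat, by omega⟩
    rw [aux_coeff_polyF_neg]
    exact h _ (by omega)

/-- degree of a polynomial vector -/
def auxdeg {n : ℕ} (v : Fin n → Polynomial K) : ℕ := Finset.univ.sup fun i => (v i).natDegree

lemma aux_pnorm_le {n : ℕ} (v : Fin n → Polynomial K) (N : ℕ) :
    pnorm v ≤ (Fintype.card K : ℝ) ^ N ↔ auxdeg v ≤ N := by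
  have hb : BddAbove (Set.range fun i => fnorm (polyF (v i))) := Set.finite_range _ |>.bddAbove
  unfold pnorm vnorm auxdeg
  rw [Finset.sup_le_iff]
  constructor
  · intro h i _
    exact (aux_fnorm_polyF_le _ _).1 ((le_ciSup hb i).trans h)
  · intro h
    exact Real.iSup_le (fun i => (aux_fnorm_polyF_le _ _).2 (h i (Finset.mem_univ _)))
      (by positivity)

lemma aux_pnorm_eq {n : ℕ} (v : Fin n → Polynomial K) (hv : 0 < pnorm v) :
    pnorm v = (Fintype.card K : ℝ) ^ (auxdeg v) ∧
      ∃ i, (v i).coeff (auxdeg v) ≠ 0 := by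
  have hq := aux_q_gt (K := K)
  have h1 : pnorm v ≤ (Fintype.card K : ℝ) ^ (auxdeg v) := (aux_pnorm_le _ _).2 le_rfl
  have hne : ∃ i, v i ≠ 0 := by
    by_contra hc
    push Not at hc
    have : pnorm v = 0 := by
      unfold pnorm vnorm
      have : ∀ i, fnorm (polyF (v i)) = 0 := by
        intro i
        rw [fnorm_eq_zero, hc i]
        exact map_zero (Polynomial.aeval (HahnSeries.single (-1 : ℤ) (1 : K)))
      simp [this]
    linarith
  have hi : ∃ i, (v i).coeff (auxdeg v) ≠ 0 := by
    obtain ⟨i0, hi0⟩ := hne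
    obtain ⟨i, _, hi⟩ := Finset.exists_mem_eq_sup (Finset.univ : Finset (Fin n)) ⟨i0, Finset.mem_univ _⟩
      fun i => (v i).natDegree
    by_cases h0 : v i = 0
    · refine ⟨i0, ?_⟩
      have hz : auxdeg v = 0 := by unfold auxdeg; rw [hi, h0]; simp
      have : (v i0).natDegree ≤ auxdeg v :=
        Finset.le_sup (f := fun i => (v i).natDegree) (Finset.mem_univ i0)
      have h3 : auxdeg v = (v i0).natDegree := by omega
      rw [h3]
      exact Polynomial.leadingCoeff_ne_zero.2 hi0
    · refine ⟨i, ?_⟩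
      have h3 : auxdeg v = (v i).natDegree := hi
      rw [h3]
      exact Polynomial.leadingCoeff_ne_zero.2 h0
  refine ⟨le_antisymm h1 ?_, hi⟩
  obtain ⟨i, hi⟩ := hi
  have hb : BddAbove (Set.range fun i => fnorm (polyF (v i))) := Set.finite_range _ |>.bddAbove
  refine le_trans ?_ (le_ciSup hb i)
  have h2 : (toL (polyF (v i))).coeff (-(auxdeg v : ℤ)) ≠ 0 := by
    rwa [aux_coeff_polyF_neg]
  have h0 : toL (polyF (v i)) ≠ 0 := by
    intro h; rw [h] at h2; simp at h2
  have hle := HahnSeries.order_le_of_coeff_ne_zero h2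
  unfold fnorm
  rw [if_neg h0, ← zpow_natCast, zpow_le_zpow_iff_right₀ hq]
  omega

lemma auxsupp (u : ℕ → K) :
    BddBelow (Function.support (fun i : ℤ => if 1 ≤ i then u (i - 1).toNat else 0)) := by
  refine ⟨1, ?_⟩
  intro i hi
  by_contra h
  simp [Function.mem_support, h] at hi

/-- series with prescribed coefficients -/
def auxmk (u : ℕ → K) : FF K :=
  (HahnSeries.ofSuppBddBelow (fun i : ℤ => if 1 ≤ i then u (i - 1).toNat else 0) (auxsupp u) :
    LaurentSeries K)

lemma auxmk_coeff (u : ℕ → K) (m : ℕ) : (toL (auxmk u)).coeff ((m:ℤ) + 1) = u m := by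
  simp [toL, auxmk]

lemma aux_lt_one_iff (x : FF K) : fnorm x < 1 ↔ ∀ i < (1:ℤ), (toL x).coeff i = 0 := by
  have hq := aux_q_gt (K := K)
  rw [← aux_fnorm_le_iff]
  constructor
  · intro h
    unfold fnorm at h ⊢
    split_ifs with h0
    · positivity
    · rw [if_neg h0, zpow_lt_one_iff_right₀ hq] at h
      rw [zpow_le_zpow_iff_right₀ hq]
      omega
  · intro h
    refine h.trans_lt ?_
    rw [zpow_lt_one_iff_right₀ hq]
    omega

lemma auxmk_lt (u : ℕ → K) : fnorm (auxmk u) < 1 := by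
  rw [aux_lt_one_iff]
  intro i hi
  simp only [toL, auxmk, HahnSeries.coeff_ofSuppBddBelow]
  rw [if_neg (by omega)]

/-- the recursive construction -/
lemma aux_construct {n : ℕ} (v : ℕ → Fin n → Polynomial K)
    (hinj : Function.Injective fun j => auxdeg (v j))
    (hne : ∀ j, ∃ i, (v j i).coeff (auxdeg (v j)) ≠ 0) (c : ℕ → Fin n → K) :
    ∃ u : ℕ → Fin n → K, (∀ s, s ∉ Set.range (fun j => auxdeg (v j)) → u s = c s) ∧
      ∀ j, ∑ i, ∑ m ∈ Finset.range (auxdeg (v j) + 1), (v j i).coeff m * u m i = 1 := by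
  choose I hI using hne
  let F : (s : ℕ) → ((t : ℕ) → t < s → (Fin n → K)) → (Fin n → K) := fun s prev =>
    if hs : ∃ j, auxdeg (v j) = s then
      Pi.single (I hs.choose) ((1 - ∑ i, ∑ m ∈ (Finset.range s).attach,
        (v hs.choose i).coeff m.1 * prev m.1 (Finset.mem_range.1 m.2) i) /
          (v hs.choose (I hs.choose)).coeff s)
    else c s
  let u : ℕ → Fin n → K := WellFounded.fix Nat.lt_wfRel.wf F
  have hu : ∀ s, u s = F s (fun t _ => u t) := fun s => WellFounded.fix_eq _ F s
  refine ⟨u, fun s hs => ?_, fun j => ?_⟩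
  · rw [hu]
    have : ¬ ∃ j, auxdeg (v j) = s := fun ⟨j, hj⟩ => hs ⟨j, hj⟩
    simp only [F, dif_neg this]
  · have hs : ∃ j', auxdeg (v j') = auxdeg (v j) := ⟨j, rfl⟩
    have hch : hs.choose = j := hinj hs.choose_spec
    have h1 : u (auxdeg (v j)) = Pi.single (I j) ((1 - ∑ i, ∑ m ∈ Finset.range (auxdeg (v j)),
        (v j i).coeff m * u m i) / (v j (I j)).coeff (auxdeg (v j))) := by
      rw [hu]
      simp only [F, dif_pos hs]
      rw [hch]
      congr 3
      refine Finset.sum_congr rfl fun i _ => ?_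
      exact Finset.sum_attach (Finset.range (auxdeg (v j))) fun m => (v j i).coeff m * u m i
    simp only [Finset.sum_range_succ, Finset.sum_add_distrib]
    rw [h1]
    rw [Finset.sum_eq_single (I j) (f := fun i => (v j i).coeff (auxdeg (v j)) * _)]
    · rw [Pi.single_eq_same, mul_div_cancel₀ _ (hI j)]
      ring
    · intro b _ hb
      rw [Pi.single_eq_of_ne hb, mul_zero]
    · simp

lemma aux_dimH_le {X : Type*} [MetricSpace X] (s : Set X) (n q : ℕ) (hq : 1 < q)
    {ι : ℕ → Type*} [∀ N, Fintype (ι N)] (hcard : ∀ N, Fintype.card (ι N) ≤ (q ^ N) ^ n)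
    (t : ∀ N, ι N → Set X)
    (hdiam : ∀ N i, Metric.ediam (t N i) ≤ ((q : ℝ≥0∞) ^ N)⁻¹)
    (hcov : ∀ N, s ⊆ ⋃ i, t N i) : dimH s ≤ n := by
  borelize X
  have hr : Tendsto (fun N : ℕ => ((q : ℝ≥0∞) ^ N)⁻¹) atTop (nhds 0) := by
    simp only [ENNReal.inv_pow]
    apply ENNReal.tendsto_pow_atTop_nhds_zero_of_lt_one
    rw [ENNReal.inv_lt_one]
    exact_mod_cast hq
  have h1 := Measure.hausdorffMeasure_le_liminf_sum (n : ℝ) s (l := atTop) _ hr t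
    (Eventually.of_forall hdiam) (Eventually.of_forall hcov)
  have h2 : ∀ N, ∑ i, Metric.ediam (t N i) ^ (n : ℝ) ≤ 1 := by
    intro N
    have hne : ((q : ℝ≥0∞) ^ N) ^ n ≠ 0 := by
      have : (q : ℝ≥0∞) ≠ 0 := by exact_mod_cast (by omega : q ≠ 0)
      positivity
    have hnt : ((q : ℝ≥0∞) ^ N) ^ n ≠ ⊤ := by
      exact_mod_cast ENNReal.natCast_ne_top ((q ^ N) ^ n)
    calc ∑ i, Metric.ediam (t N i) ^ (n : ℝ) ≤ ∑ i : ι N, (((q : ℝ≥0∞) ^ N)⁻¹) ^ n := by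
          refine Finset.sum_le_sum fun i _ => ?_
          rw [ENNReal.rpow_natCast]
          exact pow_le_pow_left' (hdiam N i) n
      _ = (Fintype.card (ι N) : ℝ≥0∞) * (((q : ℝ≥0∞) ^ N) ^ n)⁻¹ := by
          simp [ENNReal.inv_pow]
      _ ≤ (((q : ℝ≥0∞) ^ N) ^ n) * (((q : ℝ≥0∞) ^ N) ^ n)⁻¹ := by
          gcongr
          exact_mod_cast hcard N
      _ = 1 := ENNReal.mul_inv_cancel hne hnt
  have h3 : Measure.hausdorffMeasure (n : ℝ) s ≤ 1 := by
    refine h1.trans ?_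
    refine (liminf_le_liminf (Eventually.of_forall h2)).trans ?_
    simp
  have := dimH_le_of_hausdorffMeasure_ne_top (s := s) (d := (n : ℝ≥0)) (by
    refine ne_top_of_le_ne_top ENNReal.one_ne_top ?_
    simpa using h3)
  simpa using this

lemma aux_ball_eq (x y : FF K) (hx : fnorm x < 1) (hy : fnorm y < 1) (N : ℕ)
    (hxy : ∀ m < N, (toL x).coeff ((m:ℤ) + 1) = (toL y).coeff ((m:ℤ) + 1)) :
    fnorm (x - y) ≤ ((Fintype.card K : ℝ) ^ N)⁻¹ := by
  rw [← zpow_natCast, ← zpow_neg, aux_fnorm_le_iff]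
  intro i hi
  rw [toL_sub, HahnSeries.coeff_sub]
  rw [aux_lt_one_iff] at hx hy
  by_cases h1 : i < 1
  · rw [hx i h1, hy i h1, sub_zero]
  · obtain ⟨m, rfl⟩ : ∃ m : ℕ, i = (m:ℤ) + 1 := ⟨(i-1).toNat, by omega⟩
    rw [hxy m (by omega), sub_self]

lemma aux_upper {n : ℕ} (S : Set (Fin n → FF K)) (hS : ∀ θ ∈ S, ∀ i, fnorm (θ i) < 1) :
    dimH S ≤ n := by
  refine aux_dimH_le S n (Fintype.card K) Fintype.one_lt_card
    (ι := fun N => Fin n → Fin N → K) (fun N => by simp)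
    (fun N c => {θ | (∀ i, fnorm (θ i) < 1) ∧
      ∀ i (m : Fin N), (toL (θ i)).coeff (((m:ℕ):ℤ) + 1) = c i m}) ?_ ?_
  · intro N c
    refine Metric.ediam_le fun θ hθ θ' hθ' => ?_
    rw [edist_pi_le_iff]
    intro i
    rw [edist_dist]
    have h1 := aux_ball_eq (θ i) (θ' i) (hθ.1 i) (hθ'.1 i) N (fun m hm => by
      rw [hθ.2 i ⟨m, hm⟩, hθ'.2 i ⟨m, hm⟩])
    refine (ENNReal.ofReal_le_ofReal h1).trans ?_
    rw [ENNReal.ofReal_inv_of_pos (by have := aux_q_gt (K := K); positivity),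
      ENNReal.ofReal_pow (by positivity)]
    simp
  · intro N θ hθ
    rw [Set.mem_iUnion]
    exact ⟨fun i m => (toL (θ i)).coeff (((m:ℕ):ℤ) + 1), hS θ hθ, fun i m => rfl⟩

/-- the digit map -/
def auxG (e : ℕ → ℕ) (x : FF K) : ℝ :=
  Real.ofDigits fun m => Fintype.equivFin K ((toL x).coeff ((e m : ℤ) + 1))

lemma aux_holder (p : ℕ → Prop) (r : ℝ) (C : ℕ)
    (hc : ∀ N : ℕ, r * N ≤ Nat.count p N + C) (x y : FF K) (hx : fnorm x < 1) (hy : fnorm y < 1) :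
    |auxG (Nat.nth p) x - auxG (Nat.nth p) y| ≤
      (Fintype.card K : ℝ) ^ ((C : ℝ) + r) * fnorm (x - y) ^ r := by
  have hq := aux_q_gt (K := K)
  by_cases hxy : x = y
  · subst hxy
    simp only [sub_self, abs_zero]
    have := fnorm_nonneg (0 : FF K)
    positivity
  have h0 : toL (x - y) ≠ 0 := fun h => hxy (sub_eq_zero.1 h)
  have hlt : ∀ i < (1:ℤ), (toL (x - y)).coeff i = 0 := by
    intro i hi
    rw [toL_sub, HahnSeries.coeff_sub, (aux_lt_one_iff x).1 hx i hi, (aux_lt_one_iff y).1 hy i hi,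
      sub_zero]
  have ho := (HahnSeries.le_order_iff_forall h0).2 hlt
  obtain ⟨N, hN⟩ : ∃ N : ℕ, (toL (x - y)).order = (N:ℤ) + 1 :=
    ⟨((toL (x - y)).order - 1).toNat, by omega⟩
  have hf : fnorm (x - y) = (Fintype.card K : ℝ) ^ (-((N:ℝ) + 1)) := by
    unfold fnorm
    rw [if_neg h0, hN, ← Real.rpow_intCast]
    push_cast
    rfl
  have hagree : ∀ m < N, (toL x).coeff ((m:ℤ) + 1) = (toL y).coeff ((m:ℤ) + 1) := by
    intro m hm
    have := HahnSeries.coeff_eq_zero_of_lt_order (x := toL (x - y)) (i := (m:ℤ) + 1) (by omega)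
    rw [toL_sub, HahnSeries.coeff_sub] at this
    exact sub_eq_zero.1 this
  have h1 : |auxG (Nat.nth p) x - auxG (Nat.nth p) y| ≤
      ((Fintype.card K : ℝ) ^ (Nat.count p N))⁻¹ := by
    refine Real.abs_ofDigits_sub_ofDigits_le fun m hm => ?_
    rw [hagree _ (Nat.nth_lt_of_lt_count hm)]
  refine h1.trans ?_
  rw [hf, ← Real.rpow_mul (by positivity), ← Real.rpow_add (by positivity), ← Real.rpow_natCast,
    ← Real.rpow_neg (by positivity)]
  refine Real.rpow_le_rpow_of_exponent_le hq.le ?_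
  have := hc N
  linarith

lemma aux_count (D : ℕ → ℕ) (hD : StrictMono D) (M : ℕ) (hM : 0 < M) (j0 : ℕ)
    (hj : ∀ j, j0 ≤ j → M * j ≤ D j) (N : ℕ) :
    (1 - 1 / (M:ℝ)) * N ≤ Nat.count (fun s => s ∉ Set.range D) N + ((j0 + 1 : ℕ) : ℝ) := by
  have key : ∀ J, N ≤ D J → N ≤ Nat.count (fun s => s ∉ Set.range D) N + J := by
    intro J hJ
    rw [Nat.count_eq_card_filter_range]
    have hsub : Finset.range N ⊆ (Finset.range N).filter (fun s => s ∉ Set.range D) ∪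
        (Finset.range J).image D := by
      intro s hs
      rw [Finset.mem_union, Finset.mem_filter, Finset.mem_image]
      by_cases h : s ∈ Set.range D
      · right
        obtain ⟨j, rfl⟩ := h
        refine ⟨j, ?_, rfl⟩
        rw [Finset.mem_range] at hs ⊢
        exact hD.lt_iff_lt.1 (hs.trans_le hJ)
      · left; exact ⟨hs, h⟩
    have h1 := (Finset.card_le_card hsub).trans (Finset.card_union_le _ _)
    have h2 := Finset.card_image_le (s := Finset.range J) (f := D)
    simp only [Finset.card_range] at h1 h2
    omega
  have h1 := key (j0 + (N / M + 1)) (le_trans (by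
    have := Nat.lt_mul_div_succ N hM
    nlinarith) (hj _ (Nat.le_add_right _ _)))
  have h2 : ((N / M : ℕ) : ℝ) ≤ (N : ℝ) / M := Nat.cast_div_le
  have h3 : (N : ℝ) ≤ (Nat.count (fun s => s ∉ Set.range D) N : ℝ) + (j0 + (((N / M : ℕ) : ℝ) + 1)) := by
    exact_mod_cast h1
  push_cast
  have h4 : (1 - 1 / (M:ℝ)) * N = N - N / M := by ring
  rw [h4]
  linarith

lemma aux_lower {n : ℕ} (S : Set (Fin n → FF K)) (hS : ∀ θ ∈ S, ∀ i, fnorm (θ i) < 1)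
    (p : ℕ → Prop) (r : ℝ≥0) (hr : 0 < r) (C : ℕ)
    (hc : ∀ N : ℕ, (r:ℝ) * N ≤ Nat.count p N + C)
    (hinf : (Set.ofPred p).Infinite)
    (hsurj : ∀ c : ℕ → Fin n → K, ∃ θ ∈ S, ∀ s, p s → ∀ i, (toL (θ i)).coeff ((s:ℤ) + 1) = c s i) :
    (n : ℝ≥0∞) * r ≤ dimH S := by
  have hq := aux_q_gt (K := K)
  let g : (Fin n → FF K) → (Fin n → ℝ) := fun θ i => auxG (Nat.nth p) (θ i)
  have hH : HolderOnWith ((Fintype.card K : ℝ≥0) ^ ((C : ℝ) + r)) r g S := by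
    intro θ hθ θ' hθ'
    rw [edist_pi_le_iff]
    intro i
    have h1 := aux_holder p r C hc (θ i) (θ' i) (hS θ hθ i) (hS θ' hθ' i)
    have h2 : edist (g θ i) (g θ' i) ≤
        (((Fintype.card K : ℝ≥0) ^ ((C : ℝ) + r) : ℝ≥0) : ℝ≥0∞) * edist (θ i) (θ' i) ^ (r:ℝ) := by
      rw [edist_dist, Real.dist_eq]
      refine (ENNReal.ofReal_le_ofReal h1).trans ?_
      rw [ENNReal.ofReal_mul (by positivity), edist_dist,
        ← ENNReal.ofReal_rpow_of_nonneg (fnorm_nonneg _) (by positivity)]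
      refine mul_le_mul' (le_of_eq ?_) le_rfl
      rw [ENNReal.ofReal, ENNReal.coe_inj]
      ext
      rw [Real.coe_toNNReal _ (by positivity)]
      simp
    refine h2.trans ?_
    gcongr
    exact edist_le_pi_edist _ _ _
  have h1 := hH.dimH_image_le hr
  have h2 : (Set.univ.pi fun _ : Fin n => Set.Icc (0:ℝ) 1) ⊆ g '' S := by
    intro y hy
    have : ∀ i, ∃ a : ℕ → Fin (Fintype.card K), Real.ofDigits a = y i := by
      intro i
      obtain ⟨a, _, ha⟩ := Real.ofDigits_SurjOn (Fintype.one_lt_card (α := K)) (hy i trivial)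
      exact ⟨a, ha⟩
    choose a ha using this
    obtain ⟨θ, hθ, hcf⟩ := hsurj fun s i => (Fintype.equivFin K).symm (a i (Nat.count p s))
    refine ⟨θ, hθ, ?_⟩
    funext i
    rw [← ha i]
    show Real.ofDigits _ = _
    congr 1
    funext m
    rw [hcf _ (Nat.nth_mem_of_infinite hinf m), Nat.count_nth_of_infinite hinf]
    simp
  have h3 : dimH (Set.univ.pi fun _ : Fin n => Set.Icc (0:ℝ) 1) = n := by
    rw [Real.dimH_of_nonempty_interior]
    · simp
    · rw [interior_pi_set Set.finite_univ]
      simp only [interior_Icc]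
      exact ⟨fun _ => 1/2, fun i _ => by norm_num⟩
  have h4 := (h3.symm.le.trans (dimH_mono h2)).trans h1
  rwa [ENNReal.le_div_iff_mul_le (Or.inl (by exact_mod_cast hr.ne')) (Or.inl (by simp))] at h4

lemma aux_tend (n : ℕ) : Tendsto (fun M : ℕ =>
    (n : ℝ≥0∞) * ((1 - 1 / ((M:ℝ≥0) + 2) : ℝ≥0) : ℝ≥0∞)) atTop (nhds (n : ℝ≥0∞)) := by
  have ht : Tendsto (fun M : ℕ => (1 - 1 / ((M:ℝ≥0) + 2) : ℝ≥0)) atTop (nhds 1) := by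
    have h0 : Tendsto (fun M : ℕ => 1 / ((M:ℝ) + 2)) atTop (nhds 0) := by
      have := (tendsto_one_div_add_atTop_nhds_zero_nat (𝕜 := ℝ)).comp (tendsto_add_atTop_nat 1)
      refine this.congr fun M => ?_
      simp only [Function.comp]
      push_cast
      ring
    have h1 : Tendsto (fun M : ℕ => 1 / ((M:ℝ≥0) + 2)) atTop (nhds 0) := by
      rw [← NNReal.tendsto_coe]
      simpa using h0
    have h2 := (tendsto_const_nhds (x := (1:ℝ≥0)) (f := atTop)).sub h1
    rwa [tsub_zero] at h2
  have ht2 := ENNReal.Tendsto.const_mul (a := (n:ℝ≥0∞)) (ENNReal.tendsto_coe.2 ht)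
    (Or.inl (by simp))
  rwa [ENNReal.coe_one, mul_one] at ht2

end Aux

/-- (Lemma 7.1 of the paper.) For `δ ∈ (0, q⁻¹]`, if `(h_k)_{k ≥ 1}` is a sequence of
polynomial vectors with `‖h_{k+1}‖ / ‖h_k‖ ≥ q δ⁻¹` and `‖h_k‖^{1/k} → ∞`, then the set
of `θ ∈ 𝕀ⁿ` with `⟨h_k ⋅ θ⟩ ≥ δ` for all sufficiently large `k` has Hausdorff
dimension `n`. -/
theorem dimH_avoid_full {K : Type*} [Field K] [Fintype K] {n : ℕ} (hn : 0 < n)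
    (δ : ℝ) (hδ0 : 0 < δ) (hδ : δ ≤ (Fintype.card K : ℝ)⁻¹)
    (h : ℕ → Fin n → Polynomial K)
    (hratio : ∀ k, 1 ≤ k →
      (Fintype.card K : ℝ) * δ⁻¹ * pnorm (h k) ≤ pnorm (h (k + 1)))
    (hgrow : Filter.Tendsto (fun k : ℕ => pnorm (h k) ^ (1 / (k : ℝ)))
      Filter.atTop Filter.atTop) :
    dimH {θ : Fin n → FF K | (∀ i, fnorm (θ i) < 1) ∧
      ∃ k₀, ∀ k, k₀ ≤ k → δ ≤ sdist (∑ i, polyF (h k i) * θ i)} = n := by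
  have hq := aux_q_gt (K := K)
  set q : ℝ := (Fintype.card K : ℝ) with hqdef
  apply le_antisymm
  · exact aux_upper _ fun θ hθ => hθ.1
  -- growth
  have hbig : ∀ M : ℕ, ∃ k1 : ℕ, ∀ k, k1 ≤ k → q ^ (M * k) ≤ pnorm (h k) := by
    intro M
    obtain ⟨k1, hk1⟩ := eventually_atTop.1 (hgrow.eventually_ge_atTop (q ^ M))
    refine ⟨max k1 1, fun k hk => ?_⟩
    have h1 := hk1 k (le_of_max_le_left hk)
    have hk0 : (k:ℝ) ≠ 0 := by
      have := le_of_max_le_right hk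
      exact_mod_cast (by omega : k ≠ 0)
    have hp0 : 0 ≤ pnorm (h k) := Real.iSup_nonneg fun i => fnorm_nonneg _
    calc q ^ (M * k) = (q ^ M) ^ k := pow_mul _ _ _
      _ ≤ (pnorm (h k) ^ (1 / (k:ℝ))) ^ k := pow_le_pow_left₀ (by positivity) h1 k
      _ = pnorm (h k) := by
        rw [← Real.rpow_natCast, ← Real.rpow_mul hp0, one_div, inv_mul_cancel₀ hk0, Real.rpow_one]
  obtain ⟨k1, hk1⟩ := hbig 0
  have hpos : ∀ k, k1 ≤ k → 0 < pnorm (h k) := by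
    intro k hk
    have := hk1 k hk
    simp at this
    linarith
  let k0 := max k1 1
  let v : ℕ → Fin n → Polynomial K := fun j => h (k0 + j)
  have hvpos : ∀ j, 0 < pnorm (v j) := fun j => hpos _ (by
    have : k1 ≤ k0 := le_max_left _ _
    omega)
  let D : ℕ → ℕ := fun j => auxdeg (v j)
  have hstep : ∀ j, D j + 2 ≤ D (j + 1) := by
    intro j
    have h1 := hratio (k0 + j) (by
      have : 1 ≤ k0 := le_max_right _ _
      omega)
    have h2 := (aux_pnorm_eq (v j) (hvpos j)).1
    have h3 := (aux_pnorm_eq (v (j + 1)) (hvpos (j + 1))).1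
    have h4 : q ≤ δ⁻¹ := by
      rw [le_inv_comm₀ (by positivity) hδ0]
      exact hδ
    have h5 : q ^ (D j + 2) ≤ q ^ (D (j + 1)) := by
      calc q ^ (D j + 2) = q * q * q ^ (D j) := by ring
        _ ≤ q * δ⁻¹ * q ^ (D j) := by gcongr
        _ = q * δ⁻¹ * pnorm (v j) := by rw [h2]
        _ ≤ pnorm (v (j + 1)) := h1
        _ = q ^ (D (j + 1)) := h3
    exact (pow_le_pow_iff_right₀ hq).1 h5
  have hmono : StrictMono D := strictMono_nat_of_lt_succ fun j => by
    have := hstep j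
    omega
  have hlin : ∀ M : ℕ, ∃ j0, ∀ j, j0 ≤ j → M * j ≤ D j := by
    intro M
    obtain ⟨j0, hj0⟩ := hbig M
    refine ⟨j0, fun j hj => ?_⟩
    have h1 := hj0 (k0 + j) (by omega)
    have h2 := (aux_pnorm_eq (v j) (hvpos j)).1
    have h3 : q ^ (M * (k0 + j)) ≤ q ^ (D j) := h1.trans h2.le
    have h4 := (pow_le_pow_iff_right₀ hq).1 h3
    exact (Nat.mul_le_mul_left M (Nat.le_add_left j k0)).trans h4
  have hinf : (Set.ofPred fun s => s ∉ Set.range D).Infinite := by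
    refine Set.infinite_of_injective_forall_mem (f := fun j => D j + 1) ?_ ?_
    · intro a b hab
      exact hmono.injective (by simpa using hab)
    · rintro j ⟨l, hl⟩
      have hl : D l = D j + 1 := hl
      have h1 : j < l := hmono.lt_iff_lt.1 (by omega)
      have h2 : D (j + 1) ≤ D l := hmono.monotone h1
      have := hstep j
      omega
  have hsurj : ∀ c : ℕ → Fin n → K, ∃ θ ∈ {θ : Fin n → FF K | (∀ i, fnorm (θ i) < 1) ∧
      ∃ k₀, ∀ k, k₀ ≤ k → δ ≤ sdist (∑ i, polyF (h k i) * θ i)},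
      ∀ s, s ∉ Set.range D → ∀ i, (toL (θ i)).coeff ((s:ℤ) + 1) = c s i := by
    intro c
    obtain ⟨u, hu1, hu2⟩ := aux_construct v hmono.injective
      (fun j => (aux_pnorm_eq (v j) (hvpos j)).2) c
    refine ⟨fun i => auxmk fun m => u m i, ⟨fun i => auxmk_lt _, k0, fun k hk => ?_⟩, ?_⟩
    · refine hδ.trans (aux_sdist _ ?_)
      obtain ⟨j, rfl⟩ := Nat.exists_eq_add_of_le hk
      rw [aux_toL_sum, aux_coeff_sum]
      have : ∀ i, (toL (polyF (h (k0 + j) i) * auxmk fun m => u m i)).coeff 1 =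
          ∑ m ∈ Finset.range (auxdeg (v j) + 1), (v j i).coeff m * u m i := by
        intro i
        rw [aux_coeff_polyF_mul _ _ (auxdeg (v j) + 1)]
        · simp only [auxmk_coeff]
          rfl
        · exact Nat.lt_succ_of_le
            (Finset.le_sup (f := fun i => (v j i).natDegree) (Finset.mem_univ i))
      simp only [this]
      rw [hu2]
      exact one_ne_zero
    · intro s hs i
      rw [auxmk_coeff, hu1 s hs]
  have hfin : ∀ M : ℕ, (n : ℝ≥0∞) * ((1 - 1 / ((M:ℝ≥0) + 2) : ℝ≥0) : ℝ≥0∞) ≤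
      dimH {θ : Fin n → FF K | (∀ i, fnorm (θ i) < 1) ∧
      ∃ k₀, ∀ k, k₀ ≤ k → δ ≤ sdist (∑ i, polyF (h k i) * θ i)} := by
    intro M
    obtain ⟨j0, hj0⟩ := hlin (M + 2)
    have hlt : 1 / ((M:ℝ≥0) + 2) < 1 := by
      rw [div_lt_one (by positivity)]
      have : (0:ℝ≥0) ≤ M := by positivity
      calc (1:ℝ≥0) < 2 := by norm_num
        _ ≤ M + 2 := by simp
    refine aux_lower _ (fun θ hθ => hθ.1) (fun s => s ∉ Set.range D) _ (tsub_pos_of_lt hlt)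
      (j0 + 1) ?_ hinf hsurj
    intro N
    have := aux_count D hmono (M + 2) (by omega) j0 hj0 N
    rw [NNReal.coe_sub hlt.le]
    push_cast at this ⊢
    convert this
  refine le_of_tendsto' (f := fun M : ℕ =>
    (n : ℝ≥0∞) * ((1 - 1 / ((M:ℝ≥0) + 2) : ℝ≥0) : ℝ≥0∞)) (x := atTop) ?_ hfin
  exact aux_tend n
end
end
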